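/- The minimal width of the regular pentagon K = conv{v_0,...,v_4}, v_k = (cos(2πk/5), sin(2πk/5)), equals 1 + cos(π/5), and the diagonal length |v_3 - v_0| = 2·sin(3π/5) exceeds it. -/

import Mathlib

open Real

noncomputable def vtx (k : ℕ) : ℝ × ℝ :=
  (Real.cos (2*π*k/5), Real.sin (2*π*k/5))

def dot (a b : ℝ × ℝ) : ℝ := a.1 * b.1 + a.2 * b.2

/-- Support function of the pentagon K. -/
noncomputable def hK (u : ℝ × ℝ) : ℝ :=
  sSup {r : ℝ | ∃ x ∈ convexHull ℝ {p : ℝ × ℝ | ∃ k < 5, p = vtx k}, r = dot x u}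

lemma hK_le (u : ℝ × ℝ) (M : ℝ) (h : ∀ k : ℕ, k < 5 → dot (vtx k) u ≤ M) :
    ∀ x ∈ convexHull ℝ {p : ℝ × ℝ | ∃ k < 5, p = vtx k}, dot x u ≤ M := by
  have hc : Convex ℝ {x : ℝ × ℝ | dot x u ≤ M} := by
    intro x hx y hy a b ha hb hab
    simp only [Set.mem_ofPred_eq, dot, Prod.fst_add, Prod.snd_add, Prod.smul_fst, Prod.smul_snd,
      smul_eq_mul] at *
    have hb' : b = 1 - a := by linarith
    subst hb'
    nlinarith [mul_le_mul_of_nonneg_left hx ha, mul_le_mul_of_nonneg_left hy hb]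
  intro x hx
  refine convexHull_min ?_ hc hx
  rintro p ⟨k, hk, rfl⟩
  exact h k hk

lemma hK_bdd (u : ℝ × ℝ) :
    BddAbove {r : ℝ | ∃ x ∈ convexHull ℝ {p : ℝ × ℝ | ∃ k < 5, p = vtx k}, r = dot x u} := by
  refine ⟨|u.1| + |u.2|, ?_⟩
  rintro r ⟨x, hx, rfl⟩
  refine hK_le u _ ?_ x hx
  intro k _
  have key : ∀ a b : ℝ, |a| ≤ 1 → a * b ≤ |b| := by
    intro a b h
    calc a * b ≤ |a * b| := le_abs_self _
      _ = |a| * |b| := abs_mul _ _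
      _ ≤ 1 * |b| := by gcongr
      _ = |b| := one_mul _
  exact add_le_add (key _ _ (abs_cos_le_one _)) (key _ _ (abs_sin_le_one _))

lemma hK_sup_le (u : ℝ × ℝ) (M : ℝ) (h : ∀ k : ℕ, k < 5 → dot (vtx k) u ≤ M) : hK u ≤ M := by
  refine csSup_le ⟨_, vtx 0, subset_convexHull _ _ ⟨0, by norm_num, rfl⟩, rfl⟩ ?_
  rintro r ⟨x, hx, rfl⟩
  exact hK_le u M h x hx

lemma le_hK (u : ℝ × ℝ) (m : ℤ) :
    Real.cos (2*π*m/5) * u.1 + Real.sin (2*π*m/5) * u.2 ≤ hK u := by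
  obtain ⟨k, hk, q, hq⟩ : ∃ k : ℕ, k < 5 ∧ ∃ q : ℤ, m = k + 5 * q :=
    ⟨(m % 5).toNat, by omega, m / 5, by omega⟩
  have e : 2*π*m/5 = 2*π*k/5 + q * (2*π) := by
    rw [hq]; push_cast; ring
  rw [e, Real.cos_add_int_mul_two_pi, Real.sin_add_int_mul_two_pi]
  exact le_csSup (hK_bdd u) ⟨vtx k, subset_convexHull _ _ ⟨k, hk, rfl⟩, rfl⟩

lemma width_ge (t : ℝ) (m : ℤ) :
    2 * Real.cos (π/10) * |Real.cos (t - 2*π*m/5)| ≤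
      hK (Real.sin t, -Real.cos t) + hK (-(Real.sin t, -Real.cos t)) := by
  -- vertices m+1 and m-1
  have h1 := le_hK (Real.sin t, -Real.cos t) (m+1)
  have h2 := le_hK (Real.sin t, -Real.cos t) (m-1)
  have h3 := le_hK (-(Real.sin t, -Real.cos t)) (m+1)
  have h4 := le_hK (-(Real.sin t, -Real.cos t)) (m-1)
  have e1 : 2*π*((m+1 : ℤ):ℝ)/5 = 2*π*m/5 + 2*π/5 := by push_cast; ring
  have e2 : 2*π*((m-1 : ℤ):ℝ)/5 = 2*π*m/5 - 2*π/5 := by push_cast; ring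
  have e3 : Real.sin (2*π/5) = Real.cos (π/10) := by
    rw [← Real.cos_pi_div_two_sub]; congr 1; ring
  rw [e1] at h1 h3
  rw [e2] at h2 h4
  simp only [Real.cos_add, Real.sin_add, Real.cos_sub, Real.sin_sub, e3, Prod.fst_neg,
    Prod.snd_neg] at *
  rcases abs_cases (Real.cos t * Real.cos (2*π*m/5) + Real.sin t * Real.sin (2*π*m/5)) with
    ⟨h, _⟩ | ⟨h, _⟩ <;> rw [h] <;> nlinarith

lemma exists_m (t : ℝ) : ∃ m : ℤ, Real.cos (π/10) ≤ |Real.cos (t - 2*π*m/5)| := by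
  have hpi := Real.pi_pos
  have hr := abs_sub_round (t / (π/5))
  set n := round (t / (π/5))
  have hn : |t - n * (π/5)| ≤ π/10 := by
    have : t - n * (π/5) = (t / (π/5) - n) * (π/5) := by field_simp
    rw [this, abs_mul, abs_of_pos (by positivity : 0 < π/5)]
    nlinarith
  have hc : Real.cos (π/10) ≤ Real.cos (t - n * (π/5)) := by
    rw [← Real.cos_abs (t - _)]
    exact Real.cos_le_cos_of_nonneg_of_le_pi (abs_nonneg _) (by linarith) hn
  rcases Int.even_or_odd' n with ⟨m, hm | hm⟩
  · refine ⟨m, hc.trans (le_of_eq_of_le ?_ (le_abs_self _))⟩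
    rw [hm]; congr 1; push_cast; ring
  · refine ⟨m + 3, hc.trans (le_of_eq_of_le ?_ (neg_le_abs _))⟩
    rw [hm, ← Real.cos_add_pi]; congr 1; push_cast; ring

lemma two_cos_sq : 2 * Real.cos (π/10) * Real.cos (π/10) = 1 + Real.cos (π/5) := by
  have := Real.cos_sq (π/10)
  rw [show 2 * (π/10) = π/5 by ring] at this
  linarith

lemma cos_pos10 : 0 < Real.cos (π/10) :=
  Real.cos_pos_of_mem_Ioo ⟨by linarith [Real.pi_pos], by linarith [Real.pi_pos]⟩

lemma width_lower (u : ℝ × ℝ) (hu : u.1^2 + u.2^2 = 1) :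
    1 + Real.cos (π/5) ≤ hK u + hK (-u) := by
  obtain ⟨t, h1, h2⟩ : ∃ t : ℝ, Real.sin t = u.1 ∧ -Real.cos t = u.2 := by
    let z : ℂ := ⟨-u.2, u.1⟩
    have hz : ‖z‖ = 1 := by
      rw [Complex.norm_def, Complex.normSq_mk, Real.sqrt_eq_one]; linarith
    refine ⟨z.arg, ?_, ?_⟩
    · have := Complex.norm_mul_sin_arg z
      rw [hz, one_mul] at this; exact this
    · have := Complex.norm_mul_cos_arg z
      rw [hz, one_mul] at this; rw [this]; simp [z]
  obtain ⟨m, hm⟩ := exists_m t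
  have hw := width_ge t m
  have : (Real.sin t, -Real.cos t) = u := Prod.ext h1 h2
  rw [this] at hw
  have := cos_pos10
  rw [← two_cos_sq]
  exact le_trans (by gcongr) hw

lemma width_upper : hK (1, 0) + hK (-(1, 0)) ≤ 1 + Real.cos (π/5) := by
  refine add_le_add (hK_sup_le _ _ ?_) (hK_sup_le _ _ ?_)
  · intro k _
    simp [dot, vtx, Real.cos_le_one]
  · intro k hk
    have hpi := Real.pi_pos
    have p1 : 0 < Real.cos (π/5) :=
      Real.cos_pos_of_mem_Ioo ⟨by linarith, by linarith⟩
    have p2 : 0 < Real.cos (2*π/5) :=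
      Real.cos_pos_of_mem_Ioo ⟨by linarith, by linarith⟩
    have c2 : Real.cos (2*π*2/5) = - Real.cos (π/5) := by
      rw [← Real.cos_pi_sub]; congr 1; ring
    have c3 : Real.cos (2*π*3/5) = - Real.cos (π/5) := by
      rw [← Real.cos_add_pi]; congr 1; ring
    have c4 : Real.cos (2*π*4/5) = Real.cos (2*π/5) := by
      rw [← Real.cos_two_pi_sub]; congr 1; ring
    simp only [dot, vtx, Prod.fst_neg, Prod.snd_neg]
    interval_cases k <;> norm_num [c2, c3, c4] <;> linarith [Real.sqrt_nonneg 5]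

/-- The minimal width of the regular pentagon is 1 + cos(π/5), and the diagonal
length 2 sin(3π/5) exceeds it. -/
theorem pentagon_minimal_width :
    sInf {r : ℝ | ∃ u : ℝ × ℝ, u.1^2 + u.2^2 = 1 ∧ r = hK u + hK (-u)}
        = 1 + Real.cos (π/5) ∧
      Real.sqrt ((vtx 3 - vtx 0).1^2 + (vtx 3 - vtx 0).2^2) = 2 * Real.sin (3*π/5) ∧
      2 * Real.sin (3*π/5) > 1 + Real.cos (π/5) := by
  refine ⟨?_, ?_, ?_⟩
  · refine IsLeast.csInf_eq ⟨⟨(1, 0), by norm_num, ?_⟩, ?_⟩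
    · exact le_antisymm (width_lower _ (by norm_num)) width_upper
    · rintro r ⟨u, hu, rfl⟩
      exact width_lower u hu
  · have hs : 0 ≤ Real.sin (3*π/5) :=
      Real.sin_nonneg_of_nonneg_of_le_pi (by linarith [Real.pi_pos]) (by linarith [Real.pi_pos])
    rw [Real.sqrt_eq_iff_mul_self_eq (by positivity) (by positivity)]
    have e : 2*π*((3:ℕ):ℝ)/5 = 2 * (3*π/5) := by push_cast; ring
    simp only [vtx, Prod.fst_sub, Prod.snd_sub, e]
    norm_num
    rw [Real.cos_two_mul, Real.sin_two_mul]
    have := Real.sin_sq_add_cos_sq (3*π/5)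
    have h2 : Real.cos (3*π/5)^2 = 1 - Real.sin (3*π/5)^2 := by linarith
    ring_nf at *
    have h4 : Real.cos (π*(3/5))^4 = (1 - Real.sin (π*(3/5))^2)^2 := by rw [← h2]; ring
    rw [h4, h2]; ring
  · have e : Real.sin (3*π/5) = Real.cos (π/10) := by
      rw [← Real.cos_sub_pi_div_two]; congr 1; ring
    rw [e, ← two_cos_sq]
    have h0 := cos_pos10
    have h1 : Real.cos (π/10) < 1 := by
      rw [← Real.cos_zero]
      exact Real.cos_lt_cos_of_nonneg_of_le_pi le_rfl (by linarith [Real.pi_pos])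
        (by linarith [Real.pi_pos])
    nlinarith
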